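/- Let X be a real Banach space that is uniformly convex and uniformly smooth, let 1 < p < ∞, and let M, N be closed linear subspaces of X such that M + N is closed. Then the pair (M,N) is boundedly Bregman regular, i.e., for every bounded set S ⊆ X and every ε>0 there is δ>0 such that for all x ∈ S, max{D_p(M,x), D_p(N,x)} < δ implies D_p(M∩N, x) < ε. -/

import Mathlib

open Filter Topology

noncomputable section

/-- The modulus of convexity of a normed space `X`. -/
def modConvex (X : Type*) [NormedAddCommGroup X] (ε : ℝ) : ℝ :=
  sInf {d : ℝ | ∃ x y : X, ‖x‖ = 1 ∧ ‖y‖ = 1 ∧ ε ≤ ‖x - y‖ ∧ d = 1 - ‖x + y‖ / 2}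

/-- The modulus of smoothness of a normed space `X`. -/
def modSmooth (X : Type*) [NormedAddCommGroup X] [NormedSpace ℝ X] (τ : ℝ) : ℝ :=
  sSup {d : ℝ | ∃ x y : X, ‖x‖ = 1 ∧ ‖y‖ = 1 ∧ d = (‖x + τ • y‖ + ‖x - τ • y‖) / 2 - 1}

/-- `X` is uniformly convex: the modulus of convexity is positive for positive ε. -/
def UnifConvex (X : Type*) [NormedAddCommGroup X] : Prop :=
  ∀ ε : ℝ, 0 < ε → ε ≤ 2 → 0 < modConvex X ε

/-- `X` is uniformly smooth: `ρ_X(τ)/τ → 0` as `τ → 0⁺`. -/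
def UnifSmooth (X : Type*) [NormedAddCommGroup X] [NormedSpace ℝ X] : Prop :=
  Tendsto (fun τ => modSmooth X τ / τ) (𝓝[>] (0 : ℝ)) (𝓝 0)

/-- `X` is uniformly convex of power type `ρ`. -/
def PowerConvex (X : Type*) [NormedAddCommGroup X] (ρ : ℝ) : Prop :=
  ∃ c > (0 : ℝ), ∀ ε ∈ Set.Icc (0 : ℝ) 2, c * ε ^ ρ ≤ modConvex X ε

/-- `X` is uniformly smooth of power type `σ` (with `σ > 1`). -/
def PowerSmooth (X : Type*) [NormedAddCommGroup X] [NormedSpace ℝ X] (σ : ℝ) : Prop :=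
  1 < σ ∧ ∃ C > (0 : ℝ), ∀ τ ∈ Set.Icc (0 : ℝ) 1, modSmooth X τ ≤ C * τ ^ σ

variable {X : Type*} [NormedAddCommGroup X] [NormedSpace ℝ X]

/-- The duality mapping `j_p`, the Fréchet derivative of `x ↦ (1/p)‖x‖^p`. -/
def dualityMap (p : ℝ) (x : X) : X →L[ℝ] ℝ :=
  fderiv ℝ (fun y : X => 1 / p * ‖y‖ ^ p) x

/-- The Bregman distance `D_p(x, y)`. -/
def bregmanDist (p : ℝ) (x y : X) : ℝ :=
  1 / p * ‖x‖ ^ p - 1 / p * ‖y‖ ^ p - dualityMap p y (x - y)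

/-- The Bregman projection of `x` onto the set `S`: the minimizer of `m ↦ D_p(m, x)` over `S`. -/
def bregmanProj (p : ℝ) (S : Set X) (x : X) : X :=
  letI : Nonempty X := ⟨x⟩
  Classical.epsilon fun y => y ∈ S ∧ ∀ m ∈ S, bregmanDist p y x ≤ bregmanDist p m x

/-- The Bregman distance `D_p(S, x)` from the point `x` to the set `S`. -/
def bregmanDistSet (p : ℝ) (S : Set X) (x : X) : ℝ :=
  bregmanDist p (bregmanProj p S x) x

/-- The metric projection of `x` onto the set `S`: the point of `S` nearest to `x`. -/
def metricProj (S : Set X) (x : X) : X :=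
  letI : Nonempty X := ⟨x⟩
  Classical.epsilon fun y => y ∈ S ∧ ∀ m ∈ S, ‖x - y‖ ≤ ‖x - m‖

/-!
For `x` in a bounded set, `D_p(y, x)` is small if and only if `‖y - x‖` is, uniformly in `x`. One
direction comes from the uniform convexity of `‖·‖^p` on bounded sets, the other from its Lipschitz
continuity on bounded sets; uniform convexity also makes minimizing sequences of `D_p(·, x)` on a
closed subspace Cauchy, so that the Bregman projections exist.

If `M + N` is closed, then by the open mapping theorem for `M × N → M + N` every `x` has a point of
`M ∩ N` within a constant multiple of its distances to any given points of `M` and `N`. When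
`D_p(M, x)` and `D_p(N, x)` are small, the Bregman projections of `x` are close to `x` in norm,
hence so is some `z ∈ M ∩ N`, and `D_p(M ∩ N, x) ≤ D_p(z, x)` is small.
-/

open Set

theorem UnifConvex.uniformConvexSpace {E : Type*} [NormedAddCommGroup E] (h : UnifConvex E) :
    UniformConvexSpace E where
  uniform_convex ε hε := by
    refine ⟨2 * modConvex E (min ε 2), mul_pos two_pos (h _ (by positivity) (min_le_right ..)),
      fun x hx y hy hxy => ?_⟩
    have hbdd : BddBelow {d : ℝ | ∃ x y : E, ‖x‖ = 1 ∧ ‖y‖ = 1 ∧ min ε 2 ≤ ‖x - y‖ ∧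
        d = 1 - ‖x + y‖ / 2} := by
      refine ⟨0, ?_⟩
      rintro _ ⟨u, v, hu, hv, -, rfl⟩
      linarith [norm_add_le u v]
    have hle : modConvex E (min ε 2) ≤ 1 - ‖x + y‖ / 2 :=
      csInf_le hbdd ⟨x, y, hx, hy, (min_le_left ..).trans hxy, rfl⟩
    linarith

theorem le_modSmooth {τ : ℝ} (hτ : 0 ≤ τ) {u v : X} (hu : ‖u‖ = 1) (hv : ‖v‖ = 1) :
    (‖u + τ • v‖ + ‖u - τ • v‖) / 2 - 1 ≤ modSmooth X τ := by
  refine le_csSup ⟨τ, ?_⟩ ⟨u, v, hu, hv, rfl⟩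
  rintro _ ⟨x, y, hx, hy, rfl⟩
  have hadd := norm_add_le x (τ • y)
  have hsub := norm_sub_le x (τ • y)
  rw [norm_smul, Real.norm_of_nonneg hτ, hx, hy] at hadd hsub
  linarith

theorem norm_add_add_norm_sub_le_modSmooth {x h : X} (hx : x ≠ 0) (hh : h ≠ 0) :
    ‖x + h‖ + ‖x - h‖ - 2 * ‖x‖ ≤ 2 * ‖x‖ * modSmooth X (‖h‖ / ‖x‖) := by
  have hx' : 0 < ‖x‖ := norm_pos_iff.2 hx
  have hunit := le_modSmooth (div_nonneg (norm_nonneg h) hx'.le)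
    (norm_smul_inv_norm (𝕜 := ℝ) hx) (norm_smul_inv_norm (𝕜 := ℝ) hh)
  have hscale : (‖h‖ / ‖x‖) • (‖h‖⁻¹ : ℝ) • h = (‖x‖⁻¹ : ℝ) • h := by
    rw [smul_smul, div_mul_eq_mul_div, mul_inv_cancel₀ (norm_ne_zero_iff.2 hh), one_div]
  simp only [RCLike.ofReal_real_eq_id, id_eq] at hunit
  rw [hscale, ← smul_add, ← smul_sub, norm_smul_of_nonneg (by positivity),
    norm_smul_of_nonneg (by positivity)] at hunit
  calc ‖x + h‖ + ‖x - h‖ - 2 * ‖x‖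
      = 2 * ‖x‖ * ((‖x‖⁻¹ * ‖x + h‖ + ‖x‖⁻¹ * ‖x - h‖) / 2 - 1) := by field_simp
    _ ≤ 2 * ‖x‖ * modSmooth X (‖h‖ / ‖x‖) := by gcongr

theorem UnifSmooth.isLittleO_norm_add_add_norm_sub (hX : UnifSmooth X) {x : X} (hx : x ≠ 0) :
    (fun h : X => ‖x + h‖ + ‖x - h‖ - 2 * ‖x‖) =o[𝓝 0] fun h => h := by
  have hx' : 0 < ‖x‖ := norm_pos_iff.2 hx
  refine Asymptotics.isLittleO_iff.2 fun c hc => ?_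
  have hτ : Tendsto (fun h : X => ‖h‖ / ‖x‖) (𝓝[≠] 0) (𝓝[>] 0) := by
    refine tendsto_nhdsWithin_iff.2 ⟨?_, eventually_mem_nhdsWithin.mono fun h hh =>
      div_pos (norm_pos_iff.2 hh) hx'⟩
    simpa using (tendsto_norm_zero.mono_left nhdsWithin_le_nhds).div_const ‖x‖
  have hmod := (hX.comp hτ).eventually (gt_mem_nhds (half_pos hc))
  filter_upwards [eventually_nhdsWithin_iff.1 hmod] with h hmod
  rcases eq_or_ne h 0 with rfl | hh
  · simp [two_mul]
  have hsmall : modSmooth X (‖h‖ / ‖x‖) ≤ c / 2 * (‖h‖ / ‖x‖) :=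
    ((div_lt_iff₀ (by positivity)).1 (hmod hh)).le
  have htri : 2 * ‖x‖ ≤ ‖x + h‖ + ‖x - h‖ :=
    calc 2 * ‖x‖ = ‖(x + h) + (x - h)‖ := by
          rw [add_add_sub_cancel, ← two_smul ℝ x, norm_smul_of_nonneg zero_le_two]
      _ ≤ ‖x + h‖ + ‖x - h‖ := norm_add_le ..
  calc ‖‖x + h‖ + ‖x - h‖ - 2 * ‖x‖‖ = ‖x + h‖ + ‖x - h‖ - 2 * ‖x‖ :=
        Real.norm_of_nonneg (sub_nonneg.2 htri)
    _ ≤ 2 * ‖x‖ * modSmooth X (‖h‖ / ‖x‖) := norm_add_add_norm_sub_le_modSmooth hx hh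
    _ ≤ 2 * ‖x‖ * (c / 2 * (‖h‖ / ‖x‖)) := by gcongr
    _ = c * ‖h‖ := by field_simp

theorem UnifSmooth.differentiableAt_norm (hX : UnifSmooth X) {x : X} (hx : x ≠ 0) :
    DifferentiableAt ℝ (‖·‖) x := by
  obtain ⟨ψ, hψ, hψx⟩ := exists_dual_vector'' ℝ x
  have hψx : ψ x = ‖x‖ := hψx
  have hle (z : X) : ψ z ≤ ‖z‖ :=
    (le_abs_self _).trans (ψ.le_of_opNorm_le hψ z |>.trans_eq (one_mul _))
  refine HasFDerivAt.differentiableAt (f' := ψ) (hasFDerivAt_iff_isLittleO_nhds_zero.2 ?_)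
  refine (Asymptotics.isBigO_of_le _ fun h => ?_).trans_isLittleO
    (hX.isLittleO_norm_add_add_norm_sub hx)
  have hadd := hle (x + h)
  have hsub := hle (x - h)
  rw [map_add, hψx] at hadd
  rw [map_sub, hψx] at hsub
  rw [Real.norm_of_nonneg (by linarith), Real.norm_of_nonneg (by linarith)]
  linarith

theorem norm_midpoint {E : Type*} [SeminormedAddCommGroup E] [NormedSpace ℝ E] (x y : E) :
    ‖midpoint ℝ x y‖ = ‖x + y‖ / 2 := by
  rw [midpoint_eq_smul_add, norm_smul_of_nonneg (by simp), invOf_eq_inv, inv_mul_eq_div]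

theorem exists_norm_midpoint_add_le_max (E : Type*) [SeminormedAddCommGroup E] [NormedSpace ℝ E]
    [UniformConvexSpace E] (R : ℝ) {ε : ℝ} (hε : 0 < ε) :
    ∃ δ > 0, ∀ x y : E, ‖x‖ ≤ R → ‖y‖ ≤ R → ε ≤ ‖x - y‖ →
      ‖midpoint ℝ x y‖ + δ ≤ max ‖x‖ ‖y‖ := by
  obtain ⟨d, hd, hball⟩ := exists_forall_closed_ball_dist_add_le_two_sub E
    (ε := ε / max R 1) (by positivity)
  refine ⟨ε * d / 4, by positivity, fun x y hx hy hxy => ?_⟩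
  set r := max ‖x‖ ‖y‖
  have hxr : ‖x‖ ≤ r := le_max_left ..
  have hyr : ‖y‖ ≤ r := le_max_right ..
  have hr : ε / 2 ≤ r := by linarith [norm_sub_le x y]
  have hr0 : 0 < r := (half_pos hε).trans_le hr
  have hrR : r ≤ max R 1 := (max_le hx hy).trans (le_max_left ..)
  have hsum : ‖r⁻¹ • x + r⁻¹ • y‖ ≤ 2 - d := by
    apply hball
    · rw [norm_smul_of_nonneg (by positivity)]
      exact inv_mul_le_one_of_le₀ hxr hr0.le
    · rw [norm_smul_of_nonneg (by positivity)]
      exact inv_mul_le_one_of_le₀ hyr hr0.le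
    · rw [← smul_sub, norm_smul_of_nonneg (by positivity), inv_mul_eq_div]
      gcongr
  rw [← smul_add, norm_smul_of_nonneg (by positivity), inv_mul_le_iff₀ hr0] at hsum
  have : ε / 2 * d ≤ r * d := by gcongr
  rw [norm_midpoint]
  linarith

theorem exists_map_add_le_half_add_map {φ : ℝ → ℝ} (hconv : StrictConvexOn ℝ (Ici 0) φ)
    (hmono : StrictMonoOn φ (Ici 0)) (hcont : ContinuousOn φ (Ici 0)) (R : ℝ) {δ : ℝ}
    (hδ : 0 < δ) :
    ∃ γ > 0, ∀ a ∈ Icc 0 R, ∀ b ∈ Icc 0 R, ∀ s, 0 ≤ s → s ≤ (a + b) / 2 → s + δ ≤ max a b →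
      φ s + γ ≤ (φ a + φ b) / 2 := by
  let K : Set (ℝ × ℝ × ℝ) := (Icc 0 R ×ˢ Icc 0 R ×ˢ Icc 0 R) ∩
    ({q | q.2.2 ≤ (q.1 + q.2.1) / 2} ∩ {q | q.2.2 + δ ≤ max q.1 q.2.1})
  have hK : IsCompact K := (isCompact_Icc.prod (isCompact_Icc.prod isCompact_Icc)).inter_right
    ((isClosed_le (by fun_prop) (by fun_prop)).inter (isClosed_le (by fun_prop) (by fun_prop)))
  have hgap : ContinuousOn (fun q : ℝ × ℝ × ℝ => (φ q.1 + φ q.2.1) / 2 - φ q.2.2) K := by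
    refine ((hcont.comp (by fun_prop) ?_).add (hcont.comp (by fun_prop) ?_)).div_const 2 |>.sub
      (hcont.comp (by fun_prop) ?_)
    · exact fun q hq => hq.1.1.1
    · exact fun q hq => hq.1.2.1.1
    · exact fun q hq => hq.1.2.2.1
  have hpos : ∀ q ∈ K, 0 < (φ q.1 + φ q.2.1) / 2 - φ q.2.2 := by
    rintro ⟨a, b, s⟩ ⟨⟨⟨ha, -⟩, ⟨hb, -⟩, ⟨hs, -⟩⟩, hmid, hmax⟩
    dsimp only [mem_ofPred_eq] at ha hb hs hmid hmax ⊢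
    rcases eq_or_ne a b with rfl | hab
    · have : φ s < φ a := hmono hs ha (by rw [max_self] at hmax; linarith)
      linarith
    · have hstrict : φ ((a + b) / 2) < (φ a + φ b) / 2 := by
        have := hconv.2 ha hb hab one_half_pos one_half_pos (add_halves 1)
        simpa only [smul_eq_mul, one_div_mul_eq_div, ← add_div] using this
      have : φ s ≤ φ ((a + b) / 2) := hmono.monotoneOn hs (mem_Ici.2 (hs.trans hmid)) hmid
      linarith
  obtain ⟨γ, hγ, hle⟩ := hK.exists_forall_le' hgap hpos
  refine ⟨γ, hγ, fun a ha b hb s hs hmid hmax => ?_⟩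
  have : γ ≤ (φ a + φ b) / 2 - φ s :=
    hle (a, b, s) ⟨⟨ha, hb, hs, by linarith [ha.2, hb.2]⟩, hmid, hmax⟩
  linarith

/-- Uniform convexity of `g` on bounded sets, in Zălinescu's sense but tested at midpoints only:
the form in which it passes to Bregman distances and controls minimizing sequences. -/
def UniformlyConvexOnBounded (g : X → ℝ) : Prop :=
  ∀ R ε : ℝ, 0 < ε → ∃ δ > 0, ∀ x y : X, ‖x‖ ≤ R → ‖y‖ ≤ R → ε ≤ ‖x - y‖ →
    g (midpoint ℝ x y) + δ ≤ (g x + g y) / 2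

theorem uniformlyConvexOnBounded_comp_norm [UniformConvexSpace X] {φ : ℝ → ℝ}
    (hconv : StrictConvexOn ℝ (Ici 0) φ) (hmono : StrictMonoOn φ (Ici 0))
    (hcont : ContinuousOn φ (Ici 0)) : UniformlyConvexOnBounded fun x : X => φ ‖x‖ := by
  intro R ε hε
  obtain ⟨δ, hδ, hnorm⟩ := exists_norm_midpoint_add_le_max X R hε
  obtain ⟨γ, hγ, hφ⟩ := exists_map_add_le_half_add_map hconv hmono hcont R hδ
  refine ⟨γ, hγ, fun x y hx hy hxy => ?_⟩
  have hmid : ‖midpoint ℝ x y‖ ≤ (‖x‖ + ‖y‖) / 2 := by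
    rw [norm_midpoint]
    gcongr
    exact norm_add_le x y
  exact hφ _ ⟨norm_nonneg x, hx⟩ _ ⟨norm_nonneg y, hy⟩ _ (norm_nonneg _) hmid (hnorm x y hx hy hxy)

theorem UniformlyConvexOnBounded.exists_isMinOn {g : X → ℝ} (hg : UniformlyConvexOnBounded g)
    {K : Set X} (hK : IsComplete K) (hKconv : Convex ℝ K) (hKne : K.Nonempty)
    (hcont : ContinuousOn g K) (hbdd : BddBelow (g '' K))
    (hsub : ∀ c, Bornology.IsBounded {x ∈ K | g x ≤ c}) : ∃ x ∈ K, IsMinOn g K x := by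
  set I := sInf (g '' K)
  have hI (x : X) (hx : x ∈ K) : I ≤ g x := csInf_le hbdd (mem_image_of_mem g hx)
  let F : Filter X := comap g (𝓝[g '' K] I) ⊓ 𝓟 K
  have hgF : Tendsto g F (𝓝 I) :=
    (tendsto_comap.mono_left inf_le_left).mono_right nhdsWithin_le_nhds
  have hF : F.NeBot :=
    comap_inf_principal_neBot_of_image_mem
      (mem_closure_iff_nhdsWithin_neBot.1 (csInf_mem_closure (hKne.image g) hbdd))
      self_mem_nhdsWithin
  have hcauchy : Cauchy F := by
    refine Metric.cauchy_iff.2 ⟨hF, fun ε hε => ?_⟩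
    obtain ⟨R, hR⟩ := (hsub (I + 1)).exists_norm_le
    obtain ⟨δ, hδ, hmid⟩ := hg R ε hε
    refine ⟨{x ∈ K | g x < I + min 1 δ}, ?_, fun x hx y hy => ?_⟩
    · filter_upwards [hgF.eventually (gt_mem_nhds (lt_add_of_pos_right I (lt_min one_pos hδ))),
        mem_inf_of_right (mem_principal_self K)] with x hgx hxK using ⟨hxK, hgx⟩
    have hball (z : X) (hz : z ∈ {x ∈ K | g x < I + min 1 δ}) : ‖z‖ ≤ R :=
      hR z ⟨hz.1, hz.2.le.trans (by gcongr; exact min_le_left ..)⟩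
    by_contra! hxy
    have hgap := hmid x y (hball x hx) (hball y hy) (by rwa [← dist_eq_norm])
    have hmem := hI _ (hKconv.midpoint_mem hx.1 hy.1)
    linarith [hx.2, hy.2, min_le_right 1 δ]
  obtain ⟨x, hxK, hFx⟩ := hK F hcauchy inf_le_right
  have hgx : g x = I := tendsto_nhds_unique
    ((hcont x hxK).mono_left (le_inf hFx inf_le_right)) hgF
  exact ⟨x, hxK, fun y hy => hgx.trans_le (hI y hy)⟩

/-- The Bregman distance `D_f(y, x)` of a differentiable function `f`; `bregmanDist p` is the case
`f = (1/p)‖·‖^p`, see `bregmanDiv_normPowDiv`. -/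
def bregmanDiv (f : X → ℝ) (y x : X) : ℝ :=
  f y - f x - fderiv ℝ f x (y - x)

section bregmanDiv

variable {f : X → ℝ}

theorem bregmanDiv_self (f : X → ℝ) (x : X) : bregmanDiv f x x = 0 := by
  simp [bregmanDiv]

theorem bregmanDiv_midpoint (f : X → ℝ) (y z x : X) :
    bregmanDiv f (midpoint ℝ y z) x = (bregmanDiv f y x + bregmanDiv f z x) / 2 -
      ((f y + f z) / 2 - f (midpoint ℝ y z)) := by
  have h : midpoint ℝ y z - x = (2⁻¹ : ℝ) • ((y - x) + (z - x)) := by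
    rw [midpoint_eq_smul_add, invOf_eq_inv]; module
  simp only [bregmanDiv, h, map_smul, map_add, smul_eq_mul]
  ring

theorem convexOn_bregmanDiv (hf : ConvexOn ℝ univ f) (x : X) :
    ConvexOn ℝ univ fun y => bregmanDiv f y x := by
  refine ⟨convex_univ, fun y _ z _ a b ha hb hab => ?_⟩
  have hfyz := hf.2 (mem_univ y) (mem_univ z) ha hb hab
  have hsub : a • y + b • z - x = a • (y - x) + b • (z - x) := by
    rw [smul_sub, smul_sub, sub_add_sub_comm, ← add_smul, hab, one_smul]
  have hfx : f x = a * f x + b * f x := by rw [← add_mul, hab, one_mul]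
  simp only [bregmanDiv, hsub, map_add, map_smul, smul_eq_mul] at hfyz ⊢
  linarith

theorem bregmanDiv_nonneg (hf : ConvexOn ℝ univ f) {x : X} (hx : DifferentiableAt ℝ f x) (y : X) :
    0 ≤ bregmanDiv f y x := by
  have hline : ConvexOn ℝ univ (f ∘ AffineMap.lineMap (k := ℝ) x y) := hf.comp_affineMap _
  have hderiv : HasDerivAt (f ∘ AffineMap.lineMap (k := ℝ) x y) (fderiv ℝ f x (y - x)) 0 :=
    hx.hasFDerivAt.comp_hasDerivAt_of_eq 0 AffineMap.hasDerivAt_lineMap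
      (AffineMap.lineMap_apply_zero x y).symm
  have hslope := hline.le_slope_of_hasDerivAt (mem_univ 0) (mem_univ 1) one_pos hderiv
  simp only [slope_def_field, Function.comp_apply, AffineMap.lineMap_apply_one,
    AffineMap.lineMap_apply_zero, sub_zero, div_one] at hslope
  exact sub_nonneg.2 hslope

theorem continuous_bregmanDiv (hf : Continuous f) (x : X) :
    Continuous fun y => bregmanDiv f y x := by
  unfold bregmanDiv
  fun_prop

theorem UniformlyConvexOnBounded.bregmanDiv (hf : UniformlyConvexOnBounded f) (x : X) :
    UniformlyConvexOnBounded fun y => bregmanDiv f y x := by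
  intro R ε hε
  obtain ⟨δ, hδ, hmid⟩ := hf R ε hε
  refine ⟨δ, hδ, fun y z hy hz hyz => ?_⟩
  linarith [hmid y z hy hz hyz, bregmanDiv_midpoint f y z x]

theorem bregmanDiv_lineMap_le (hf : ConvexOn ℝ univ f) (x y : X) {t : ℝ} (ht : t ∈ Icc 0 1) :
    bregmanDiv f (AffineMap.lineMap x y t) x ≤ t * bregmanDiv f y x := by
  have h := (convexOn_bregmanDiv hf x).2 (mem_univ x) (mem_univ y) (sub_nonneg.2 ht.2) ht.1
    (sub_add_cancel 1 t)
  simpa only [← AffineMap.lineMap_apply_module, bregmanDiv_self, smul_eq_mul, mul_zero,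
    zero_add] using h

-- The gap which uniform convexity gives at distance `ε` grows linearly beyond, because `D_f(·, x)`
-- is convex and vanishes at `x`.
theorem exists_mul_norm_sub_le_bregmanDiv (hu : UniformlyConvexOnBounded f)
    (hf : ConvexOn ℝ univ f) (hd : Differentiable ℝ f) (R : ℝ) {ε : ℝ} (hε : 0 < ε) :
    ∃ δ > 0, ∀ x y : X, ‖x‖ ≤ R → ε ≤ ‖y - x‖ → δ * ‖y - x‖ ≤ bregmanDiv f y x := by
  obtain ⟨δ, hδ, hmid⟩ := hu (R + ε) ε hε
  refine ⟨2 * δ / ε, by positivity, fun x y hx hxy => ?_⟩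
  have hxy0 : 0 < ‖y - x‖ := hε.trans_le hxy
  set t := ε / ‖y - x‖
  have ht : 0 < t := by positivity
  set z : X := AffineMap.lineMap x y t
  have hzx : ‖z - x‖ = ε := by
    rw [← dist_eq_norm, dist_lineMap_left, dist_comm, dist_eq_norm,
      Real.norm_of_nonneg ht.le, div_mul_cancel₀ _ hxy0.ne']
  have hz : ‖z‖ ≤ R + ε := by linarith [norm_le_norm_add_norm_sub' z x]
  have hgap : 2 * δ ≤ bregmanDiv f z x := by
    linarith [hmid z x hz (by linarith) hzx.ge, bregmanDiv_midpoint f z x x,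
      bregmanDiv_self f x, bregmanDiv_nonneg hf (hd x) (midpoint ℝ z x)]
  have hray := bregmanDiv_lineMap_le hf x y ⟨ht.le, (div_le_one hxy0).2 hxy⟩
  calc 2 * δ / ε * ‖y - x‖ = 2 * δ / t := by simp only [t]; field_simp
    _ ≤ bregmanDiv f y x := (div_le_iff₀' ht).2 (hgap.trans hray)

theorem exists_norm_sub_lt_of_bregmanDiv_lt (hu : UniformlyConvexOnBounded f)
    (hf : ConvexOn ℝ univ f) (hd : Differentiable ℝ f) (R : ℝ) {ε : ℝ} (hε : 0 < ε) :
    ∃ δ > 0, ∀ x y : X, ‖x‖ ≤ R → bregmanDiv f y x < δ → ‖y - x‖ < ε := by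
  obtain ⟨δ, hδ, hlow⟩ := exists_mul_norm_sub_le_bregmanDiv hu hf hd R hε
  refine ⟨δ * ε, by positivity, fun x y hx hD => ?_⟩
  by_contra! hxy
  exact hD.not_ge ((mul_le_mul_of_nonneg_left hxy hδ.le).trans (hlow x y hx hxy))

theorem isBounded_setOf_bregmanDiv_le (hu : UniformlyConvexOnBounded f)
    (hf : ConvexOn ℝ univ f) (hd : Differentiable ℝ f) (x : X) (c : ℝ) :
    Bornology.IsBounded {y | bregmanDiv f y x ≤ c} := by
  obtain ⟨δ, hδ, hlow⟩ := exists_mul_norm_sub_le_bregmanDiv hu hf hd ‖x‖ one_pos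
  refine (Metric.isBounded_closedBall (x := x) (r := max 1 (c / δ))).subset fun y hy => ?_
  rw [mem_closedBall_iff_norm, le_max_iff, le_div_iff₀' hδ, or_iff_not_imp_left, not_le]
  exact fun hxy => (hlow x y le_rfl hxy.le).trans hy

theorem exists_isMinOn_bregmanDiv (hu : UniformlyConvexOnBounded f) (hf : ConvexOn ℝ univ f)
    (hd : Differentiable ℝ f) {K : Set X} (hK : IsComplete K) (hKconv : Convex ℝ K)
    (hKne : K.Nonempty) (x : X) : ∃ y ∈ K, IsMinOn (fun y => bregmanDiv f y x) K y := by
  refine (hu.bregmanDiv x).exists_isMinOn hK hKconv hKne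
    (continuous_bregmanDiv hd.continuous x).continuousOn ⟨0, ?_⟩ fun c =>
      (isBounded_setOf_bregmanDiv_le hu hf hd x c).subset fun y hy => hy.2
  rintro _ ⟨y, -, rfl⟩
  exact bregmanDiv_nonneg hf (hd x) y

theorem exists_lipschitzOnWith_ball (hf : ConvexOn ℝ univ f)
    (hb : ∀ R, ∃ C, ∀ x, ‖x‖ ≤ R → |f x| ≤ C) (R : ℝ) :
    ∃ L, LipschitzOnWith L f (Metric.ball 0 R) := by
  obtain ⟨C, hC⟩ := hb (R + 1)
  have h := (hf.subset (subset_univ _) (convex_ball 0 (R + 1))).lipschitzOnWith_of_abs_le one_pos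
    fun x hx => hC x (by simpa using hx.le)
  exact ⟨_, by simpa using h⟩

theorem exists_bregmanDiv_lt_of_norm_sub_lt (hf : ConvexOn ℝ univ f)
    (hb : ∀ R, ∃ C, ∀ x, ‖x‖ ≤ R → |f x| ≤ C) (R : ℝ) {ε : ℝ} (hε : 0 < ε) :
    ∃ δ > 0, ∀ x y : X, ‖x‖ ≤ R → ‖y - x‖ < δ → bregmanDiv f y x < ε := by
  obtain ⟨L, hL⟩ := exists_lipschitzOnWith_ball hf hb (R + 1)
  refine ⟨min 1 (ε / (2 * L + 1)), by positivity, fun x y hx hxy => ?_⟩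
  have hxball : x ∈ Metric.ball (0 : X) (R + 1) := mem_ball_zero_iff.2 (by linarith)
  have hyball : y ∈ Metric.ball (0 : X) (R + 1) := mem_ball_zero_iff.2 (by
    linarith [norm_le_norm_add_norm_sub' y x, min_le_left 1 (ε / (2 * L + 1 : ℝ))])
  have hincr : f y - f x ≤ L * ‖y - x‖ :=
    (le_abs_self _).trans (hL.norm_sub_le hyball hxball)
  have hlin : -fderiv ℝ f x (y - x) ≤ L * ‖y - x‖ :=
    (neg_le_abs _).trans ((fderiv ℝ f x).le_of_opNorm_le
      (norm_fderiv_le_of_lipschitzOn ℝ (Metric.isOpen_ball.mem_nhds hxball) hL) _)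
  have hsmall : (2 * L + 1) * ‖y - x‖ < ε :=
    (lt_div_iff₀' (by positivity)).1 (hxy.trans_le (min_le_right ..))
  unfold bregmanDiv
  linarith [norm_nonneg (y - x)]

end bregmanDiv

/-- The power functional `(1/p)‖·‖^p`, whose Bregman distance is `D_p`. -/
def normPowDiv {E : Type*} [Norm E] (p : ℝ) (x : E) : ℝ :=
  1 / p * ‖x‖ ^ p

theorem bregmanDiv_normPowDiv (p : ℝ) : bregmanDiv (normPowDiv (E := X) p) = bregmanDist p :=
  rfl

theorem convexOn_normPowDiv {p : ℝ} (hp : 1 ≤ p) : ConvexOn ℝ univ (normPowDiv (E := X) p) := by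
  have hrpow : ConvexOn ℝ ((‖·‖) '' (univ : Set X)) fun t : ℝ => t ^ p :=
    (convexOn_rpow hp).subset (by rintro _ ⟨x, -, rfl⟩; exact norm_nonneg x)
      (isPreconnected_univ.image _ continuous_norm.continuousOn).ordConnected.convex
  have hmono : MonotoneOn (fun t : ℝ => t ^ p) ((‖·‖) '' (univ : Set X)) := by
    rintro _ ⟨x, -, rfl⟩ _ _ hxy
    exact Real.rpow_le_rpow (norm_nonneg x) hxy (by linarith)
  exact (hrpow.comp convexOn_univ_norm hmono).smul (by positivity)

theorem differentiable_normPowDiv {p : ℝ} (hp : 1 < p)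
    (hnorm : ∀ x : X, x ≠ 0 → DifferentiableAt ℝ (‖·‖) x) :
    Differentiable ℝ (normPowDiv (E := X) p) := by
  intro x
  refine DifferentiableAt.const_mul ?_ (1 / p)
  rcases eq_or_ne x 0 with rfl | hx
  · have hrpow : (fun t : ℝ => t ^ p) =o[𝓝 0] fun t => t := by
      have := (Real.hasDerivAt_rpow_const (x := 0) (Or.inr hp.le)).isLittleO
      simpa [Real.zero_rpow (by linarith : p ≠ 0), Real.zero_rpow (by linarith : p - 1 ≠ 0)]
        using this
    refine HasFDerivAt.differentiableAt (f' := 0) (hasFDerivAt_iff_isLittleO_nhds_zero.2 ?_)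
    simpa [Function.comp_def, Real.zero_rpow (by linarith : p ≠ 0)] using
      (hrpow.comp_tendsto (tendsto_norm_zero (E := X))).of_norm_right
  · exact (hnorm x hx).rpow_const (Or.inl (norm_ne_zero_iff.2 hx))

theorem uniformlyConvexOnBounded_normPowDiv [UniformConvexSpace X] {p : ℝ} (hp : 1 < p) :
    UniformlyConvexOnBounded (normPowDiv (E := X) p) := by
  intro R ε hε
  obtain ⟨δ, hδ, hmid⟩ := uniformlyConvexOnBounded_comp_norm (X := X) (strictConvexOn_rpow hp)
    (Real.strictMonoOn_rpow_Ici_of_exponent_pos (by linarith))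
    (Real.continuous_rpow_const (by linarith)).continuousOn R ε hε
  refine ⟨1 / p * δ, by positivity, fun x y hx hy hxy => ?_⟩
  calc normPowDiv p (midpoint ℝ x y) + 1 / p * δ
      = 1 / p * (‖midpoint ℝ x y‖ ^ p + δ) := by rw [normPowDiv, mul_add]
    _ ≤ 1 / p * ((‖x‖ ^ p + ‖y‖ ^ p) / 2) := by gcongr; exact hmid x y hx hy hxy
    _ = (normPowDiv p x + normPowDiv p y) / 2 := by simp only [normPowDiv]; ring

theorem exists_abs_normPowDiv_le (E : Type*) [SeminormedAddCommGroup E] {p : ℝ} (hp : 0 ≤ p)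
    (R : ℝ) : ∃ C, ∀ x : E, ‖x‖ ≤ R → |normPowDiv p x| ≤ C := by
  refine ⟨1 / p * R ^ p, fun x hx => ?_⟩
  rw [normPowDiv, abs_of_nonneg (by positivity)]
  gcongr

theorem bregmanProj_spec [UniformConvexSpace X] {p : ℝ} (hp : 1 < p)
    (hnorm : ∀ x : X, x ≠ 0 → DifferentiableAt ℝ (‖·‖) x) {K : Set X} (hK : IsComplete K)
    (hKconv : Convex ℝ K) (hKne : K.Nonempty) (x : X) :
    bregmanProj p K x ∈ K ∧ ∀ m ∈ K, bregmanDistSet p K x ≤ bregmanDist p m x :=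
  Classical.epsilon_spec (exists_isMinOn_bregmanDiv (uniformlyConvexOnBounded_normPowDiv hp)
    (convexOn_normPowDiv hp.le) (differentiable_normPowDiv hp hnorm) hK hKconv hKne x)

theorem exists_mem_inf_norm_sub_le {M N : Submodule ℝ X} (hM : IsComplete (M : Set X))
    (hN : IsComplete (N : Set X)) (hMN : IsComplete ((M ⊔ N : Submodule ℝ X) : Set X)) :
    ∃ C > 0, ∀ m ∈ M, ∀ n ∈ N, ∃ z ∈ M ⊓ N, ‖z - m‖ ≤ C * ‖m - n‖ := by
  have := hM.completeSpace_coe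
  have := hN.completeSpace_coe
  let T : M × N →L[ℝ] X := M.subtypeL.coprod N.subtypeL
  have hT : T.range = M ⊔ N := by
    simp [T, LinearMap.range_coprod]
  have : CompleteSpace T.range := by rw [hT]; exact hMN.completeSpace_coe
  obtain ⟨C, hC, hpre⟩ := T.rangeRestrict.exists_preimage_norm_le
    (LinearMap.surjective_rangeRestrict _)
  refine ⟨C, hC, fun m hm n hn => ?_⟩
  have hmn : m - n ∈ T.range := hT ▸ (M ⊔ N).sub_mem (Submodule.mem_sup_left hm)
    (Submodule.mem_sup_right hn)
  obtain ⟨⟨u, v⟩, huv, hle⟩ := hpre ⟨m - n, hmn⟩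
  have huv : (u : X) + v = m - n := congrArg Subtype.val huv
  have hz : m - u = n + v := by rw [sub_eq_iff_eq_add, add_assoc, add_comm (v : X), huv]; abel
  refine ⟨m - u, ⟨M.sub_mem hm u.2, hz ▸ N.add_mem hn v.2⟩, ?_⟩
  calc ‖m - u - m‖ = ‖u‖ := by rw [sub_sub_cancel_left, norm_neg, Submodule.coe_norm]
    _ ≤ ‖(u, v)‖ := norm_fst_le (u, v)
    _ ≤ C * ‖m - n‖ := hle

theorem exists_mem_inf_norm_sub_le_max {M N : Submodule ℝ X} (hM : IsComplete (M : Set X))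
    (hN : IsComplete (N : Set X)) (hMN : IsComplete ((M ⊔ N : Submodule ℝ X) : Set X)) :
    ∃ C > 0, ∀ x, ∀ m ∈ M, ∀ n ∈ N, ∃ z ∈ M ⊓ N, ‖z - x‖ ≤ C * max ‖m - x‖ ‖n - x‖ := by
  obtain ⟨C, hC, hz⟩ := exists_mem_inf_norm_sub_le hM hN hMN
  refine ⟨2 * C + 1, by positivity, fun x m hm n hn => ?_⟩
  obtain ⟨z, hzMN, hzm⟩ := hz m hm n hn
  refine ⟨z, hzMN, ?_⟩
  set r := max ‖m - x‖ ‖n - x‖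
  have hmx : ‖m - x‖ ≤ r := le_max_left ..
  have hmn : ‖m - n‖ ≤ 2 * r := by
    linarith [norm_sub_le_norm_sub_add_norm_sub m x n, norm_sub_rev x n,
      le_max_right ‖m - x‖ ‖n - x‖]
  calc ‖z - x‖ ≤ ‖z - m‖ + ‖m - x‖ := norm_sub_le_norm_sub_add_norm_sub ..
    _ ≤ C * ‖m - n‖ + ‖m - x‖ := by gcongr
    _ ≤ C * (2 * r) + r := by gcongr
    _ = (2 * C + 1) * r := by ring

theorem isComplete_inter {α : Type*} [UniformSpace α] {s t : Set α} (hs : IsComplete s)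
    (ht : IsClosed t) : IsComplete (s ∩ t) := by
  intro F hF hFst
  obtain ⟨x, hxs, hFx⟩ := hs F hF (hFst.trans (principal_mono.2 inter_subset_left))
  have := hF.1
  exact ⟨x, ⟨hxs, ht.mem_of_tendsto hFx (le_principal_iff.1
    (hFst.trans (principal_mono.2 inter_subset_right)))⟩, hFx⟩

theorem statement7_general {X : Type*} [NormedAddCommGroup X] [NormedSpace ℝ X]
    [UniformConvexSpace X] (hnorm : ∀ x : X, x ≠ 0 → DifferentiableAt ℝ (‖·‖) x) {p : ℝ}
    (hp : 1 < p) {M N : Submodule ℝ X} (hM : IsComplete (M : Set X))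
    (hN : IsComplete (N : Set X)) (hMN : IsComplete ((M ⊔ N : Submodule ℝ X) : Set X)) :
    ∀ S : Set X, Bornology.IsBounded S → ∀ ε > (0 : ℝ), ∃ δ > (0 : ℝ), ∀ x ∈ S,
      max (bregmanDistSet p (M : Set X) x) (bregmanDistSet p (N : Set X) x) < δ →
        bregmanDistSet p ((M ⊓ N : Submodule ℝ X) : Set X) x < ε := by
  intro S hS ε hε
  have hconv := convexOn_normPowDiv (X := X) hp.le
  obtain ⟨R, hR⟩ := hS.exists_norm_le
  obtain ⟨C, hC, hlin⟩ := exists_mem_inf_norm_sub_le_max hM hN hMN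
  obtain ⟨η, hη, hupper⟩ := exists_bregmanDiv_lt_of_norm_sub_lt hconv
    (exists_abs_normPowDiv_le X (by linarith)) R hε
  obtain ⟨δ, hδ, hlower⟩ := exists_norm_sub_lt_of_bregmanDiv_lt
    (uniformlyConvexOnBounded_normPowDiv hp) hconv (differentiable_normPowDiv hp hnorm) R
    (div_pos hη hC)
  simp only [bregmanDiv_normPowDiv] at hupper hlower
  have hproj (K : Submodule ℝ X) (hK : IsComplete (K : Set X)) :=
    bregmanProj_spec hp hnorm hK K.convex ⟨0, K.zero_mem⟩
  refine ⟨δ, hδ, fun x hx hmax => ?_⟩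
  obtain ⟨hMδ, hNδ⟩ := max_lt_iff.1 hmax
  obtain ⟨z, hz, hzx⟩ := hlin x _ (hproj M hM x).1 _ (hproj N hN x).1
  have hzη : ‖z - x‖ < η := hzx.trans_lt <| (lt_div_iff₀' hC).1 <|
    max_lt (hlower x _ (hR x hx) hMδ) (hlower x _ (hR x hx) hNδ)
  calc bregmanDistSet p ((M ⊓ N : Submodule ℝ X) : Set X) x
      ≤ bregmanDist p z x := (hproj _ (isComplete_inter hM hN.isClosed) x).2 z hz
    _ < ε := hupper x z (hR x hx) hzη

theorem statement7 {X : Type*} [NormedAddCommGroup X] [NormedSpace ℝ X] [CompleteSpace X]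
    (hconv : UnifConvex X) (hsmooth : UnifSmooth X) (p : ℝ) (hp : 1 < p)
    (M N : Submodule ℝ X) (hM : IsClosed (M : Set X)) (hN : IsClosed (N : Set X))
    (hMN : IsClosed ((M ⊔ N : Submodule ℝ X) : Set X)) :
    ∀ S : Set X, Bornology.IsBounded S → ∀ ε > (0 : ℝ), ∃ δ > (0 : ℝ), ∀ x ∈ S,
      max (bregmanDistSet p (M : Set X) x) (bregmanDistSet p (N : Set X) x) < δ →
        bregmanDistSet p ((M ⊓ N : Submodule ℝ X) : Set X) x < ε := by
  have := hconv.uniformConvexSpace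
  exact statement7_general (fun _ hx => hsmooth.differentiableAt_norm hx) hp hM.isComplete
    hN.isComplete hMN.isComplete
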